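/- Let 2 < c < 37/18, set δ = c/2 − 1 + η, and let x be a real number with τ ≤ |x| ≤ K. Let M, N ≥ 1 with MN ≍ X (that is, MN is of exact order X) and M ≫ X^{1 − 72δ/7}, and let (b_n) be complex numbers with |b_n| ≪ 1. Then |Σ_{M < m ≤ 2M} Σ_{N < n ≤ 2N} b_n e(x m^c n^c)| ≪ X^{1−δ}, where the implied constant depends only on c and η. -/

import Mathlib

noncomputable def e (t : ℝ) : ℂ := Complex.exp (2 * Real.pi * Complex.I * t)

lemma e_add (a b : ℝ) : e (a + b) = e a * e b := by
  unfold e; rw [← Complex.exp_add]; congr 1; push_cast; ring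

lemma e_norm (a : ℝ) : ‖e a‖ = 1 := by
  unfold e
  rw [show (2 * Real.pi * Complex.I * a : ℂ) = ((2 * Real.pi * a : ℝ) : ℂ) * Complex.I by
    push_cast; ring]
  exact Complex.norm_exp_ofReal_mul_I _

lemma e_conj (a : ℝ) : (starRingEnd ℂ) (e a) = e (-a) := by
  unfold e
  rw [← Complex.exp_conj]; congr 1
  simp [Complex.conj_ofReal, Complex.conj_ofNat]

lemma e_int (k : ℤ) : e k = 1 := by
  unfold e
  rw [Complex.exp_eq_one_iff]
  exact ⟨k, by push_cast; ring⟩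

lemma e_sub_int (t : ℝ) (k : ℤ) : e (t - k) = e t := by
  have := e_add (t - k) k
  rw [e_int, mul_one, sub_add_cancel] at this
  exact this.symm

lemma e_w (g : ℝ) (hs : Real.sin (Real.pi * g) ≠ 0) :
    ((1 / 2 : ℂ) + Complex.I / 2 * ((Real.cos (Real.pi * g) / Real.sin (Real.pi * g) : ℝ) : ℂ))
      * (1 - e g) = 1 := by
  have h1 : e g = (((Real.cos (Real.pi * g) : ℝ) : ℂ) + ((Real.sin (Real.pi * g) : ℝ) : ℂ) * Complex.I) ^ 2 := by
    unfold e
    rw [show (2 * Real.pi * Complex.I * g : ℂ) =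
      ((Real.pi * g : ℝ) : ℂ) * Complex.I + ((Real.pi * g : ℝ) : ℂ) * Complex.I by push_cast; ring,
      Complex.exp_add, ← sq, Complex.exp_mul_I]
    push_cast; rfl
  have h2 := Real.sin_sq_add_cos_sq (Real.pi * g)
  rw [h1]
  set s := Real.sin (Real.pi * g)
  set co := Real.cos (Real.pi * g)
  have h3 : (s : ℂ) ^ 2 + (co : ℂ) ^ 2 = 1 := by exact_mod_cast h2
  have hs' : (s : ℂ) ≠ 0 := by exact_mod_cast hs
  push_cast
  field_simp
  have hI : Complex.I ^ 2 = -1 := Complex.I_sq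
  have hI3 : Complex.I ^ 3 = -Complex.I := by rw [pow_succ, hI]; ring
  ring_nf
  rw [hI, hI3]
  linear_combination (s - Complex.I * co) * h3

lemma sin_lb (θ g : ℝ) (h0 : 0 < θ) (h1 : θ ≤ g) (h2 : g ≤ 1 - θ) :
    2 * θ ≤ Real.sin (Real.pi * g) := by
  have hp := Real.pi_pos
  rcases le_total g (1 / 2) with h | h
  · have := Real.mul_le_sin (x := Real.pi * g) (by nlinarith) (by nlinarith)
    have h3 : 2 / Real.pi * (Real.pi * g) = 2 * g := by field_simp
    linarith
  · have := Real.mul_le_sin (x := Real.pi * (1 - g)) (by nlinarith) (by nlinarith)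
    have h3 : 2 / Real.pi * (Real.pi * (1 - g)) = 2 * (1 - g) := by field_simp
    have h4 : Real.sin (Real.pi * (1 - g)) = Real.sin (Real.pi * g) := by
      rw [show Real.pi * (1 - g) = Real.pi - Real.pi * g by ring, Real.sin_pi_sub]
    linarith

lemma cot_anti (a b : ℝ) (ha : 0 < a) (hb : b < 1) (hab : a ≤ b) :
    Real.cos (Real.pi * b) / Real.sin (Real.pi * b) ≤
    Real.cos (Real.pi * a) / Real.sin (Real.pi * a) := by
  have hp := Real.pi_pos
  have sa : 0 < Real.sin (Real.pi * a) :=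
    Real.sin_pos_of_pos_of_lt_pi (by positivity) (by nlinarith)
  have sb : 0 < Real.sin (Real.pi * b) :=
    Real.sin_pos_of_pos_of_lt_pi (by nlinarith) (by nlinarith)
  have sc : 0 ≤ Real.sin (Real.pi * b - Real.pi * a) :=
    Real.sin_nonneg_of_nonneg_of_le_pi (by nlinarith) (by nlinarith)
  rw [Real.sin_sub] at sc
  rw [div_le_div_iff₀ sb sa]
  nlinarith

/-- Kusmin-Landau -/
lemma kusmin (f : ℕ → ℝ) (L : ℕ) (ν : ℤ) (θ : ℝ) (hθ : 0 < θ)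
    (h1 : ∀ n < L, ν + θ ≤ f (n + 1) - f n ∧ f (n + 1) - f n ≤ ν + 1 - θ)
    (h2 : ∀ n, n + 1 < L → f (n + 1) - f n ≤ f (n + 2) - f (n + 1)) :
    ‖∑ n ∈ Finset.range L, e (f n)‖ ≤ 1 / θ := by
  obtain _ | k := L
  · simp; positivity
  set g : ℕ → ℝ := fun n => f (n + 1) - f n - ν with hg
  set ct : ℕ → ℝ := fun n => Real.cos (Real.pi * g n) / Real.sin (Real.pi * g n) with hct
  set w : ℕ → ℂ := fun n => (1 / 2 : ℂ) + Complex.I / 2 * ((ct n : ℝ) : ℂ) with hw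
  have hs : ∀ n < k + 1, 2 * θ ≤ Real.sin (Real.pi * g n) := fun n hn =>
    sin_lb θ (g n) hθ (by have := (h1 n hn).1; simp only [hg]; linarith)
      (by have := (h1 n hn).2; simp only [hg]; linarith)
  have hwe : ∀ n < k + 1, w n * (e (f n) - e (f (n + 1))) = e (f n) := by
    intro n hn
    have hne : Real.sin (Real.pi * g n) ≠ 0 := by have := hs n hn; intro h; linarith
    have h3 := e_w (g n) hne
    have h4 : e (f (n + 1)) = e (f n) * e (g n) := by
      rw [← e_add, ← e_sub_int (f (n + 1)) ν]; congr 1; simp only [hg]; ring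
    rw [h4]
    linear_combination (e (f n)) * h3
  have hctb : ∀ n < k + 1, |ct n| ≤ 1 / (2 * θ) := by
    intro n hn
    have h5 := hs n hn
    simp only [hct]
    rw [abs_div, abs_of_pos (by linarith : 0 < Real.sin (Real.pi * g n))]
    exact div_le_div₀ zero_le_one (Real.abs_cos_le_one _) (by linarith) h5
  have hwb : ∀ n < k + 1, ‖w n‖ ≤ 1 / (4 * θ) := by
    intro n hn
    have h5 := hs n hn
    have hsp : 0 < Real.sin (Real.pi * g n) := by linarith
    have : ‖w n‖ ^ 2 = (1 / (2 * Real.sin (Real.pi * g n))) ^ 2 := by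
      rw [← Complex.normSq_eq_norm_sq, Complex.normSq_apply]
      simp only [hw, hct]
      have h2 := Real.sin_sq_add_cos_sq (Real.pi * g n)
      set s := Real.sin (Real.pi * g n)
      set co := Real.cos (Real.pi * g n)
      have e1 : ((1 / 2 : ℂ) + Complex.I / 2 * ((co / s : ℝ) : ℂ)).re = 1 / 2 := by
        simp
      have e2 : ((1 / 2 : ℂ) + Complex.I / 2 * ((co / s : ℝ) : ℂ)).im = co / s / 2 := by
        simp; ring
      rw [e1, e2]
      field_simp
      linarith
    have h6 : ‖w n‖ = 1 / (2 * Real.sin (Real.pi * g n)) :=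
      (sq_eq_sq₀ (norm_nonneg _) (by positivity)).1 this
    rw [h6]
    exact one_div_le_one_div_of_le (by positivity) (by linarith)
  have hP : ∀ j < k + 1, ‖∑ n ∈ Finset.range (j + 1), e (f n) + w j * e (f (j + 1))‖ ≤
      1 / (4 * θ) + (ct 0 - ct j) / 2 := by
    intro j
    induction j with
    | zero =>
      intro hj
      have := hwe 0 hj
      have h7 : ∑ n ∈ Finset.range (0 + 1), e (f n) + w 0 * e (f (0 + 1)) = w 0 * e (f 0) := by
        simp only [zero_add, Finset.sum_range_one] at *
        linear_combination -this
      rw [h7, norm_mul, e_norm]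
      have := hwb 0 hj
      simpa using this
    | succ j ih =>
      intro hj
      have ih' := ih (by omega)
      have h8 := hwe (j + 1) hj
      have h7 : ∑ n ∈ Finset.range (j + 1 + 1), e (f n) + w (j + 1) * e (f (j + 1 + 1)) =
        (∑ n ∈ Finset.range (j + 1), e (f n) + w j * e (f (j + 1))) +
          (w (j + 1) - w j) * e (f (j + 1)) := by
        rw [Finset.sum_range_succ]
        linear_combination -h8
      have h9 : ct (j + 1) ≤ ct j := by
        simp only [hct]
        have a1 := h1 j (by omega)
        have a2 := h1 (j + 1) hj
        have a3 := h2 j hj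
        apply cot_anti
        · simp only [hg]; linarith
        · simp only [hg]; linarith
        · simp only [hg]; linarith
      have h10 : ‖(w (j + 1) - w j) * e (f (j + 1))‖ = (ct j - ct (j + 1)) / 2 := by
        rw [norm_mul, e_norm, mul_one]
        have : w (j + 1) - w j = Complex.I * (((ct (j + 1) - ct j) / 2 : ℝ) : ℂ) := by
          simp only [hw]; push_cast; ring
        rw [this, norm_mul, Complex.norm_I, one_mul, Complex.norm_real, Real.norm_eq_abs,
          abs_of_nonpos (by linarith)]
        ring
      rw [h7]
      refine (norm_add_le _ _).trans ?_
      rw [h10]; linarith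
  have hf := hP k (by omega)
  have e1 : ∑ n ∈ Finset.range (k + 1), e (f n) =
    (∑ n ∈ Finset.range (k + 1), e (f n) + w k * e (f (k + 1))) - w k * e (f (k + 1)) := by ring
  rw [e1]
  refine (norm_sub_le _ _).trans ?_
  rw [norm_mul (w k), e_norm, mul_one]
  have b1 := hwb k (by omega)
  have b2 := abs_le.1 (hctb k (by omega))
  have b3 := abs_le.1 (hctb 0 (by omega))
  have : 1 / θ = 1 / (4 * θ) + (1 / (2 * θ) + 1 / (2 * θ)) / 2 + 1 / (4 * θ) := by
    field_simp; norm_num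
  rw [this]
  linarith
lemma corr_shift (φ : ℕ → ℂ) (H L k : ℕ) (hk : k ≤ H)
    (h0 : ∀ n, n < H ∨ H + L ≤ n → φ n = 0) :
    ∑ m ∈ Finset.range (L + H), φ (m + k) = ∑ n ∈ Finset.range L, φ (n + H) := by
  have e1 : ∑ m ∈ Finset.range (L + H), φ (m + k) = ∑ n ∈ Finset.Ico k (L + H + k), φ n := by
    rw [Finset.sum_Ico_eq_sum_range]
    simp [add_comm]
  have e2 : ∑ n ∈ Finset.range L, φ (n + H) = ∑ n ∈ Finset.Ico H (L + H), φ n := by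
    rw [Finset.sum_Ico_eq_sum_range]
    simp [add_comm]
  rw [e1, e2]
  symm
  apply Finset.sum_subset
  · intro n; simp only [Finset.mem_Ico]; omega
  · intro n _ h
    apply h0
    simp only [Finset.mem_Ico] at h; omega

lemma weyl (z : ℕ → ℂ) (L H : ℕ) (L0 : ℝ) (hz : ∀ n, ‖z n‖ = 1) (hH : 0 < H)
    (hL : (L : ℝ) ≤ L0) (hHL : (H : ℝ) ≤ L0) :
    ‖∑ n ∈ Finset.range L, z n‖ ^ 2 ≤ 2 * L0 / H *
      (L0 + 2 * ∑ j ∈ Finset.range H,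
        ‖∑ n ∈ Finset.range (L - (j + 1)), z (n + (j + 1)) * (starRingEnd ℂ) (z n)‖) := by
  classical
  set w : ℕ → ℂ := fun n => if H ≤ n ∧ n < H + L then z (n - H) else 0 with hw
  set C : ℕ → ℂ := fun h => ∑ n ∈ Finset.range (L - h), z (n + h) * (starRingEnd ℂ) (z n) with hC
  set S := ∑ n ∈ Finset.range L, z n with hS
  have w0 : ∀ n, n < H ∨ H + L ≤ n → w n = 0 := by
    intro n hn; simp only [hw]; rw [if_neg]; omega
  have w1 : ∀ n, n < L → w (n + H) = z n := by
    intro n hn; simp only [hw]; rw [if_pos (by omega)]; simp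
  have hsum : ∀ k < H, ∑ m ∈ Finset.range (L + H), w (m + k) = S := by
    intro k hk
    rw [corr_shift w H L k hk.le w0]
    exact Finset.sum_congr rfl fun n hn => w1 n (Finset.mem_range.1 hn)
  have hcorr : ∀ k h, k + h < H → ∑ m ∈ Finset.range (L + H),
      w (m + (k + h)) * (starRingEnd ℂ) (w (m + k)) = C h := by
    intro k h hk
    have := corr_shift (fun n => w (n + h) * (starRingEnd ℂ) (w n)) H L k (by omega)
      (by intro n hn; simp [w0 n hn])
    simp only [add_assoc] at this ⊢
    rw [this]
    simp only [hC]
    have hsub : Finset.range (L - h) ⊆ Finset.range L := by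
      intro n; simp only [Finset.mem_range]; omega
    rw [← Finset.sum_subset hsub]
    · refine Finset.sum_congr rfl fun n hn => ?_
      have hn := Finset.mem_range.1 hn
      rw [w1 n (by omega), show n + (H + h) = (n + h) + H by ring, w1 (n + h) (by omega)]
    · intro n _ hn
      have hn : ¬ n < L - h := fun h' => hn (Finset.mem_range.2 h')
      rw [w0 (n + (H + h)) (by omega), zero_mul]
  have hcorr' : ∀ k h, k + h < H → ‖∑ m ∈ Finset.range (L + H),
      w (m + k) * (starRingEnd ℂ) (w (m + (k + h)))‖ = ‖C h‖ := by
    intro k h hk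
    rw [← hcorr k h hk, ← Complex.norm_conj]
    congr 1
    simp [mul_comm]
  set c : ℕ → ℝ := fun h => ‖C h‖ with hc
  have hc0 : c 0 ≤ L0 := by
    simp only [hc, hC]
    refine (norm_sum_le _ _).trans ?_
    simp [hz]; exact hL
  set Sg := ∑ j ∈ Finset.range H, c (j + 1) with hSg
  have hcn : ∀ h, 0 ≤ c h := fun h => norm_nonneg _
  have hrow : ∀ k < H, ∑ k' ∈ Finset.range H, ‖∑ m ∈ Finset.range (L + H),
      w (m + k) * (starRingEnd ℂ) (w (m + k'))‖ ≤ L0 + 2 * Sg := by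
    intro k hk
    rw [← Finset.sum_range_add_sum_Ico _ hk.le]
    have r1 : ∑ k' ∈ Finset.range k, ‖∑ m ∈ Finset.range (L + H),
      w (m + k) * (starRingEnd ℂ) (w (m + k'))‖ ≤ Sg := by
      have : ∀ k' ∈ Finset.range k, ‖∑ m ∈ Finset.range (L + H),
          w (m + k) * (starRingEnd ℂ) (w (m + k'))‖ = c (k - 1 - k' + 1) := by
        intro k' hk'
        have hk' := Finset.mem_range.1 hk'
        have := hcorr k' (k - 1 - k' + 1) (by omega)
        rw [show k' + (k - 1 - k' + 1) = k by omega] at this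
        rw [this]
      rw [Finset.sum_congr rfl this, Finset.sum_range_reflect (fun j => c (j + 1)) k]
      refine Finset.sum_le_sum_of_subset_of_nonneg ?_ (fun _ _ _ => hcn _)
      intro n; simp only [Finset.mem_range]; omega
    have r2 : ∑ k' ∈ Finset.Ico k H, ‖∑ m ∈ Finset.range (L + H),
      w (m + k) * (starRingEnd ℂ) (w (m + k'))‖ ≤ L0 + Sg := by
      rw [Finset.sum_Ico_eq_sum_range]
      have : ∀ j ∈ Finset.range (H - k), ‖∑ m ∈ Finset.range (L + H),
          w (m + k) * (starRingEnd ℂ) (w (m + (k + j)))‖ = c j := by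
        intro j hj
        have hj := Finset.mem_range.1 hj
        exact hcorr' k j (by omega)
      rw [Finset.sum_congr rfl this]
      have : ∑ j ∈ Finset.range (H - k), c j ≤ ∑ j ∈ Finset.range (H + 1), c j := by
        refine Finset.sum_le_sum_of_subset_of_nonneg ?_ (fun _ _ _ => hcn _)
        intro n; simp only [Finset.mem_range]; omega
      rw [Finset.sum_range_succ'] at this
      linarith
    linarith
  have hHr : (0 : ℝ) < H := by exact_mod_cast hH
  have hkey : (H : ℝ) * ‖S‖ ≤ ∑ m ∈ Finset.range (L + H), ‖∑ k ∈ Finset.range H, w (m + k)‖ := by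
    have : (H : ℂ) * S = ∑ m ∈ Finset.range (L + H), ∑ k ∈ Finset.range H, w (m + k) := by
      rw [Finset.sum_comm, Finset.sum_congr rfl fun k hk => hsum k (Finset.mem_range.1 hk)]
      simp
    calc (H : ℝ) * ‖S‖ = ‖(H : ℂ) * S‖ := by simp
      _ ≤ _ := by rw [this]; exact norm_sum_le _ _
  have hsq : ∑ m ∈ Finset.range (L + H), ‖∑ k ∈ Finset.range H, w (m + k)‖ ^ 2 ≤
      H * (L0 + 2 * Sg) := by
    have e1 : ((∑ m ∈ Finset.range (L + H), ‖∑ k ∈ Finset.range H, w (m + k)‖ ^ 2 : ℝ) : ℂ) =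
        ∑ k ∈ Finset.range H, ∑ k' ∈ Finset.range H, ∑ m ∈ Finset.range (L + H),
          w (m + k) * (starRingEnd ℂ) (w (m + k')) := by
      have : ∀ k ∈ Finset.range H, ∑ k' ∈ Finset.range H, ∑ m ∈ Finset.range (L + H),
          w (m + k) * (starRingEnd ℂ) (w (m + k')) =
          ∑ m ∈ Finset.range (L + H), ∑ k' ∈ Finset.range H,
          w (m + k) * (starRingEnd ℂ) (w (m + k')) := fun k _ => Finset.sum_comm
      rw [Finset.sum_congr rfl this, Finset.sum_comm]
      push_cast
      refine Finset.sum_congr rfl fun m _ => ?_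
      rw [← Complex.mul_conj', map_sum, Finset.sum_mul_sum]
    have e2 : ∑ m ∈ Finset.range (L + H), ‖∑ k ∈ Finset.range H, w (m + k)‖ ^ 2 =
        ‖∑ k ∈ Finset.range H, ∑ k' ∈ Finset.range H, ∑ m ∈ Finset.range (L + H),
          w (m + k) * (starRingEnd ℂ) (w (m + k'))‖ := by
      rw [← e1, Complex.norm_real, Real.norm_eq_abs, abs_of_nonneg]
      positivity
    rw [e2]
    refine (norm_sum_le _ _).trans ?_
    calc _ ≤ ∑ k ∈ Finset.range H, (L0 + 2 * Sg) := by
          refine Finset.sum_le_sum fun k hk => (norm_sum_le _ _).trans (hrow k (Finset.mem_range.1 hk))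
      _ = _ := by rw [Finset.sum_const, Finset.card_range, nsmul_eq_mul]
  have hcs := sq_sum_le_card_mul_sum_sq (s := Finset.range (L + H))
    (f := fun m => ‖∑ k ∈ Finset.range H, w (m + k)‖)
  rw [Finset.card_range] at hcs
  have hSg0 : 0 ≤ Sg := Finset.sum_nonneg fun _ _ => hcn _
  have hL0 : 0 ≤ L0 := le_trans hHr.le hHL
  have h1 : ((H : ℝ) * ‖S‖) ^ 2 ≤ (2 * L0) * (H * (L0 + 2 * Sg)) := by
    calc ((H : ℝ) * ‖S‖) ^ 2 ≤ _ := pow_le_pow_left₀ (by positivity) hkey 2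
      _ ≤ _ := hcs
      _ ≤ (2 * L0) * (H * (L0 + 2 * Sg)) := by
        apply mul_le_mul _ hsq (by positivity) (by positivity)
        push_cast; linarith
  have h2 : ‖S‖ ^ 2 = ((H : ℝ) * ‖S‖) ^ 2 / H ^ 2 := by field_simp
  rw [h2, div_le_iff₀ (by positivity)]
  refine h1.trans (le_of_eq ?_)
  field_simp
lemma ordconn_Ico (S : Finset ℕ) (h : ∀ a ∈ S, ∀ b ∈ S, ∀ n, a ≤ n → n ≤ b → n ∈ S) :
    ∃ p q, p ≤ q ∧ S = Finset.Ico p q := by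
  rcases S.eq_empty_or_nonempty with h0 | h0
  · exact ⟨0, 0, le_rfl, by simp [h0]⟩
  · refine ⟨S.min' h0, S.max' h0 + 1, ?_, ?_⟩
    · have := S.min'_le_max' h0; omega
    · ext n
      simp only [Finset.mem_Ico]
      constructor
      · intro hn
        exact ⟨S.min'_le n hn, by have := S.le_max' n hn; omega⟩
      · rintro ⟨h1, h2⟩
        exact h _ (S.min'_mem h0) _ (S.max'_mem h0) n h1 (by omega)

lemma incr (g : ℕ → ℝ) (K : ℕ) (lam : ℝ) (h : ∀ n, n + 1 < K → lam ≤ g (n + 1) - g n) :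
    ∀ j p, p + j < K → lam * j ≤ g (p + j) - g p := by
  intro j p
  induction j with
  | zero => intro _; simp
  | succ j ih =>
    intro hj
    have h1 := ih (by omega)
    have h2 := h (p + j) (by omega)
    rw [← add_assoc]
    push_cast
    linarith

lemma short_block (g : ℕ → ℝ) (K : ℕ) (lam α θ : ℝ) (hl : 0 < lam) (hθ : 0 ≤ θ) (P : ℝ → Prop)
    [DecidablePred P]
    (h : ∀ n, n + 1 < K → lam ≤ g (n + 1) - g n)
    (hP : ∀ x y z, P x → P z → x ≤ y → y ≤ z → P y)
    (hPb : ∀ x, P x → α ≤ x ∧ x ≤ α + θ) :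
    (((Finset.range K).filter (fun n => P (g n))).card : ℝ) ≤ θ / lam + 1 := by
  have hm : ∀ a b, a ≤ b → b < K → g a ≤ g b := by
    intro a b hab hb
    obtain ⟨j, rfl⟩ := Nat.exists_eq_add_of_le hab
    have := incr g K lam h j a hb
    nlinarith [(Nat.cast_nonneg j : (0:ℝ) ≤ j)]
  obtain ⟨p, q, hpq, hS⟩ := ordconn_Ico ((Finset.range K).filter (fun n => P (g n))) (by
    intro a ha b hb n h1 h2
    simp only [Finset.mem_filter, Finset.mem_range] at *
    exact ⟨by omega, hP _ _ _ ha.2 hb.2 (hm _ _ h1 (by omega)) (hm _ _ h2 hb.1)⟩)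
  rcases hpq.eq_or_lt with rfl | hlt
  · rw [hS]; simp; positivity
  · have m1 : p ∈ (Finset.range K).filter (fun n => P (g n)) := by rw [hS]; simp; omega
    have m2 : q - 1 ∈ (Finset.range K).filter (fun n => P (g n)) := by rw [hS]; simp; omega
    rw [hS]
    simp only [Finset.mem_filter, Finset.mem_range] at m1 m2
    have := incr g K lam h (q - 1 - p) p (by omega)
    rw [show p + (q - 1 - p) = q - 1 by omega] at this
    have b1 := hPb _ m1.2
    have b2 := hPb _ m2.2
    have : ((q - 1 - p : ℕ) : ℝ) ≤ θ / lam := by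
      rw [le_div_iff₀ hl]; linarith
    rw [Nat.card_Ico, show q - p = (q - 1 - p) + 1 by omega]
    push_cast
    linarith

lemma second_small (f : ℕ → ℝ) (K : ℕ) (lam θ : ℝ) (hl : 0 < lam) (hθ : 0 < θ)
    (h : ∀ n, n + 1 < K → lam ≤ f (n + 2) - 2 * f (n + 1) + f n ∧
      f (n + 2) - 2 * f (n + 1) + f n ≤ 4 * lam) :
    ‖∑ n ∈ Finset.range K, e (f n)‖ ≤ (4 * lam * K + 2) * (2 * (θ / lam + 1) + 1 / θ) := by
  classical
  obtain _ | k := K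
  · simp; positivity
  set K := k + 1 with hK
  set g : ℕ → ℝ := fun n => f (n + 1) - f n with hg
  have hinc : ∀ n, n + 1 < K → lam ≤ g (n + 1) - g n := by
    intro n hn; have := (h n hn).1; simp only [hg]; linarith
  have hm : ∀ a b, a ≤ b → b < K → g a ≤ g b := by
    intro a b hab hb
    obtain ⟨j, rfl⟩ := Nat.exists_eq_add_of_le hab
    have := incr g K lam hinc j a hb
    nlinarith [(Nat.cast_nonneg j : (0:ℝ) ≤ j)]
  have hfib : ∀ ν : ℤ, ‖∑ n ∈ (Finset.range K).filter (fun n => ⌊g n⌋ = ν), e (f n)‖ ≤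
      2 * (θ / lam + 1) + 1 / θ := by
    intro ν
    set A := (Finset.range K).filter (fun n => ⌊g n⌋ = ν) with hA
    rw [← Finset.sum_filter_add_sum_filter_not A (fun n => g n < ν + θ),
      ← Finset.sum_filter_add_sum_filter_not (A.filter (fun n => ¬ g n < ν + θ))
        (fun n => ν + 1 - θ < g n)]
    have triv : ∀ T : Finset ℕ, ‖∑ n ∈ T, e (f n)‖ ≤ T.card := by
      intro T
      refine (norm_sum_le _ _).trans ?_
      simp [e_norm]
    have t1 : ‖∑ n ∈ A.filter (fun n => g n < ν + θ), e (f n)‖ ≤ θ / lam + 1 := by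
      refine (triv _).trans ?_
      rw [hA, Finset.filter_filter]
      apply short_block g K lam ν θ hl hθ.le (fun x => ⌊x⌋ = ν ∧ x < ν + θ) hinc
      · intro x y z hx hz h1 h2
        simp only [Int.floor_eq_iff] at *
        refine ⟨⟨?_, ?_⟩, ?_⟩ <;> linarith [hx.1.1, hz.1.2, hz.2]
      · intro x hx
        simp only [Int.floor_eq_iff] at *
        exact ⟨hx.1.1, hx.2.le⟩
    have t2 : ‖∑ n ∈ (A.filter (fun n => ¬ g n < ν + θ)).filter (fun n => ν + 1 - θ < g n),
        e (f n)‖ ≤ θ / lam + 1 := by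
      refine (triv _).trans ?_
      rw [hA, Finset.filter_filter, Finset.filter_filter]
      apply short_block g K lam (ν + 1 - θ) θ hl hθ.le
        (fun x => (⌊x⌋ = ν ∧ ¬ x < ν + θ ∧ ν + 1 - θ < x)) hinc
      · intro x y z hx hz h1 h2
        simp only [Int.floor_eq_iff, not_lt] at *
        refine ⟨⟨?_, ?_⟩, ?_, ?_⟩ <;> linarith [hx.1.1, hx.2.1, hx.2.2, hz.1.2, hz.2]
      · intro x hx
        simp only [Int.floor_eq_iff] at *
        exact ⟨hx.2.2.le, by linarith [hx.1.2]⟩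
    have t3 : ‖∑ n ∈ (A.filter (fun n => ¬ g n < ν + θ)).filter (fun n => ¬ ν + 1 - θ < g n),
        e (f n)‖ ≤ 1 / θ := by
      obtain ⟨p, q, hpq, hS⟩ := ordconn_Ico
        ((A.filter (fun n => ¬ g n < ν + θ)).filter (fun n => ¬ ν + 1 - θ < g n)) (by
        intro a ha b hb n h1 h2
        simp only [hA, Finset.mem_filter, Finset.mem_range, Int.floor_eq_iff, not_lt] at *
        have g1 := hm _ _ h1 (by omega)
        have g2 := hm _ _ h2 (by omega)
        refine ⟨⟨⟨by omega, ?_, ?_⟩, ?_⟩, ?_⟩ <;>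
          linarith [ha.1.1.2.1, ha.1.2, hb.1.1.2.2, hb.2])
      have hmem : ∀ n, p ≤ n → n < q → n < K ∧ ν + θ ≤ g n ∧ g n ≤ ν + 1 - θ := by
        intro n h1 h2
        have : n ∈ Finset.Ico p q := by simp; omega
        rw [← hS] at this
        simp only [hA, Finset.mem_filter, Finset.mem_range, not_lt] at this
        exact ⟨this.1.1.1, this.1.2, this.2⟩
      rw [hS, Finset.sum_Ico_eq_sum_range]
      apply kusmin (fun n => f (p + n)) (q - p) ν θ hθ
      · intro n hn
        exact (hmem (p + n) (by omega) (by omega)).2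
      · intro n hn
        have := hinc (p + n) (hmem (p + n + 1) (by omega) (by omega)).1
        simp only [hg] at this
        simp only [← add_assoc]
        have e1 : p + n + 1 + 1 = p + n + 2 := rfl
        rw [e1] at this
        linarith
    refine (norm_add_le _ _).trans ?_
    have := norm_add_le (∑ n ∈ (A.filter (fun n => ¬ g n < ν + θ)).filter (fun n => ν + 1 - θ < g n),
        e (f n)) (∑ n ∈ (A.filter (fun n => ¬ g n < ν + θ)).filter (fun n => ¬ ν + 1 - θ < g n),
        e (f n))
    linarith
  have hmaps : ∀ n ∈ Finset.range K, ⌊g n⌋ ∈ Finset.Icc ⌊g 0⌋ ⌊g k⌋ := by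
    intro n hn
    have hn := Finset.mem_range.1 hn
    rw [Finset.mem_Icc]
    exact ⟨Int.floor_mono (hm _ _ (by omega) hn), Int.floor_mono (hm _ _ (by omega) (by omega))⟩
  rw [← Finset.sum_fiberwise_of_maps_to hmaps]
  refine (norm_sum_le _ _).trans ?_
  refine (Finset.sum_le_sum fun ν _ => hfib ν).trans ?_
  rw [Finset.sum_const, nsmul_eq_mul]
  apply mul_le_mul_of_nonneg_right _ (by positivity)
  have hup : g k - g 0 ≤ 4 * lam * k := by
    have := incr (fun n => - g n) K (-(4 * lam)) (by
      intro n hn; have := (h n hn).2; simp only [hg]; linarith) k 0 (by omega)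
    simp only [zero_add] at this
    linarith
  rw [Int.card_Icc]
  have hle : ⌊g 0⌋ ≤ ⌊g k⌋ := Int.floor_mono (hm _ _ (by omega) (by omega))
  have hcast : (((⌊g k⌋ + 1 - ⌊g 0⌋).toNat : ℕ) : ℝ) = (⌊g k⌋ : ℝ) + 1 - ⌊g 0⌋ := by
    have : (((⌊g k⌋ + 1 - ⌊g 0⌋).toNat : ℕ) : ℤ) = ⌊g k⌋ + 1 - ⌊g 0⌋ := Int.toNat_of_nonneg (by omega)
    exact_mod_cast this
  rw [hcast]
  have f1 := Int.floor_le (g k)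
  have f2 := Int.lt_floor_add_one (g 0)
  have : (K : ℝ) = k + 1 := by simp [hK]
  rw [this]
  nlinarith

lemma second (f : ℕ → ℝ) (L : ℕ) (lam : ℝ) (hl : 0 < lam)
    (h : ∀ n, n + 2 < L → lam ≤ f (n + 2) - 2 * f (n + 1) + f n ∧
      f (n + 2) - 2 * f (n + 1) + f n ≤ 4 * lam) :
    ‖∑ n ∈ Finset.range L, e (f n)‖ ≤ 24 * (L * √lam + 1 / √lam) := by
  have hs : 0 < √lam := Real.sqrt_pos.2 hl
  have hss : √lam * √lam = lam := Real.mul_self_sqrt hl.le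
  rcases le_total lam 1 with h1 | h1
  · have hs1 : √lam ≤ 1 := Real.sqrt_le_one.2 h1
    have hinv : 1 ≤ 1 / √lam := by rw [le_div_iff₀ hs]; linarith
    obtain _ | K := L
    · simp
    rw [Finset.sum_range_succ]
    refine (norm_add_le _ _).trans ?_
    rw [e_norm]
    have := second_small f K lam (√lam) hl hs (fun n hn => h n (by omega))
    have e1 : √lam / lam = 1 / √lam := by
      rw [div_eq_div_iff hl.ne' hs.ne', hss]; ring
    rw [e1] at this
    have e2 : (4 * lam * K + 2) * (2 * (1 / √lam + 1) + 1 / √lam) ≤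
        (4 * lam * K + 2) * (6 * (1 / √lam)) := by
      apply mul_le_mul_of_nonneg_left _ (by positivity)
      linarith
    have e3 : (4 * lam * K + 2) * (6 * (1 / √lam)) = 24 * (K * √lam) + 12 * (1 / √lam) := by
      have : lam * (1 / √lam) = √lam := by
        rw [mul_one_div, div_eq_iff hs.ne', hss]
      linear_combination 24 * (K : ℝ) * this
    have e4 : (K : ℝ) * √lam ≤ ((K + 1 : ℕ) : ℝ) * √lam := by push_cast; nlinarith
    linarith
  · have hs1 : 1 ≤ √lam := Real.one_le_sqrt.2 h1
    have : ‖∑ n ∈ Finset.range L, e (f n)‖ ≤ L := by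
      refine (norm_sum_le _ _).trans ?_
      simp [e_norm]
    have h2 : (L : ℝ) ≤ L * √lam := by nlinarith [(Nat.cast_nonneg L : (0:ℝ) ≤ L)]
    have : 0 < 1 / √lam := by positivity
    nlinarith

lemma sum_sqrt (H : ℕ) : ∑ j ∈ Finset.range H, √((j : ℝ) + 1) ≤ H * √(H : ℝ) := by
  calc _ ≤ ∑ j ∈ Finset.range H, √(H : ℝ) := by
        refine Finset.sum_le_sum fun j hj => Real.sqrt_le_sqrt ?_
        have := Finset.mem_range.1 hj
        exact_mod_cast this
    _ = _ := by simp

lemma sum_inv_sqrt (H : ℕ) : ∑ j ∈ Finset.range H, 1 / √((j : ℝ) + 1) ≤ 2 * √(H : ℝ) := by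
  induction H with
  | zero => simp
  | succ n ih =>
    rw [Finset.sum_range_succ]
    push_cast
    have hp : 0 < √((n : ℝ) + 1) := Real.sqrt_pos.2 (by positivity)
    have h1 : √((n : ℝ) + 1) ^ 2 = n + 1 := Real.sq_sqrt (by positivity)
    have h2 : √(n : ℝ) ^ 2 = n := Real.sq_sqrt (by positivity)
    have : 1 / √((n : ℝ) + 1) ≤ 2 * √((n : ℝ) + 1) - 2 * √(n : ℝ) := by
      rw [div_le_iff₀ hp]
      nlinarith [sq_nonneg (√((n : ℝ) + 1) - √(n : ℝ))]
    linarith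
lemma weyl_e (f : ℕ → ℝ) (L H : ℕ) (L0 : ℝ) (hH : 0 < H)
    (hL : (L : ℝ) ≤ L0) (hHL : (H : ℝ) ≤ L0) :
    ‖∑ n ∈ Finset.range L, e (f n)‖ ^ 2 ≤ 2 * L0 / H *
      (L0 + 2 * ∑ j ∈ Finset.range H,
        ‖∑ n ∈ Finset.range (L - (j + 1)), e (f (n + (j + 1)) - f n)‖) := by
  have := weyl (fun n => e (f n)) L H L0 (fun n => e_norm _) hH hL hHL
  simpa only [e_conj, ← e_add, ← sub_eq_add_neg] using this

lemma fourth (f : ℕ → ℝ) (L H : ℕ) (lam : ℝ) (hl : 0 < lam) (hH : 0 < H) (hHL : H ^ 2 ≤ L)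
    (h : ∀ h1 h2 n : ℕ, 1 ≤ h1 → 1 ≤ h2 → n + 2 + h2 + h1 < L → ∀ d : ℕ → ℝ,
      d = (fun n => f (n + h2 + h1) - f (n + h2) - (f (n + h1) - f n)) →
      lam * h1 * h2 ≤ d (n + 2) - 2 * d (n + 1) + d n ∧
      d (n + 2) - 2 * d (n + 1) + d n ≤ 4 * (lam * h1 * h2)) :
    ‖∑ n ∈ Finset.range L, e (f n)‖ ^ 4 ≤
      20000 * ((L : ℝ) ^ 4 / H ^ 2 + L ^ 4 * √(lam * H ^ 3) + L ^ 3 * (1 / √(lam * H ^ 3))) := by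
  have hHr : (1 : ℝ) ≤ H := by exact_mod_cast hH
  have hH2L : ((H ^ 2 : ℕ) : ℝ) ≤ L := by exact_mod_cast hHL
  have hHL' : (H : ℝ) ≤ L := by push_cast at hH2L; nlinarith
  set l : ℝ := (L : ℝ) with hl_def
  have hl0 : 0 < l := by linarith
  -- second level
  have hS1 : ∀ j : ℕ, ‖∑ n ∈ Finset.range (L - (j + 1)), e (f (n + (j + 1)) - f n)‖ ^ 2 ≤
      2 * l ^ 2 / H ^ 2 + 96 * l ^ 2 * H * (√lam * √((j : ℝ) + 1)) +
        192 * l / (H * √lam) * (1 / √((j : ℝ) + 1)) := by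
    intro j
    set A : ℝ := √lam * √((j : ℝ) + 1) with hA
    have hA0 : 0 < A := mul_pos (Real.sqrt_pos.2 hl) (Real.sqrt_pos.2 (by positivity))
    have w := weyl_e (fun n => f (n + (j + 1)) - f n) (L - (j + 1)) (H ^ 2) l (by positivity)
      (by simp only [hl_def]; exact_mod_cast Nat.sub_le _ _) hH2L
    refine w.trans ?_
    have hb : ∀ i ∈ Finset.range (H ^ 2),
        ‖∑ n ∈ Finset.range (L - (j + 1) - (i + 1)),
          e (f (n + (i + 1) + (j + 1)) - f (n + (i + 1)) - (f (n + (j + 1)) - f n))‖ ≤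
        24 * (l * A) * √((i : ℝ) + 1) + 24 / A * (1 / √((i : ℝ) + 1)) := by
      intro i _
      have hp : 0 < lam * ((j + 1 : ℕ) : ℝ) * ((i + 1 : ℕ) : ℝ) := by positivity
      have := second (fun n => f (n + (i + 1) + (j + 1)) - f (n + (i + 1)) - (f (n + (j + 1)) - f n))
        (L - (j + 1) - (i + 1)) _ hp
        (fun n hn => h (j + 1) (i + 1) n (by omega) (by omega) (by omega) _ rfl)
      refine this.trans ?_
      have es : √(lam * ((j + 1 : ℕ) : ℝ) * ((i + 1 : ℕ) : ℝ)) = A * √((i : ℝ) + 1) := by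
        rw [Real.sqrt_mul (by positivity), Real.sqrt_mul (by positivity)]
        push_cast; rfl
      rw [es]
      have hsi : 0 < √((i : ℝ) + 1) := Real.sqrt_pos.2 (by positivity)
      have hLl : ((L - (j + 1) - (i + 1) : ℕ) : ℝ) ≤ l := by
        simp only [hl_def]; exact_mod_cast (by omega)
      have := mul_le_mul_of_nonneg_right hLl (mul_pos hA0 hsi).le
      have e2 : 24 / A * (1 / √((i : ℝ) + 1)) = 24 * (1 / (A * √((i : ℝ) + 1))) := by
        field_simp
      rw [e2]
      linarith
    have hsum := Finset.sum_le_sum hb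
    rw [Finset.sum_add_distrib, ← Finset.mul_sum, ← Finset.mul_sum] at hsum
    have s1 := sum_sqrt (H ^ 2)
    have s2 := sum_inv_sqrt (H ^ 2)
    have e3 : √((H ^ 2 : ℕ) : ℝ) = H := by
      push_cast; exact Real.sqrt_sq (by positivity)
    rw [e3] at s1 s2
    push_cast at s1
    have hsum2 : ∑ i ∈ Finset.range (H ^ 2),
        ‖∑ n ∈ Finset.range (L - (j + 1) - (i + 1)),
          e (f (n + (i + 1) + (j + 1)) - f (n + (i + 1)) - (f (n + (j + 1)) - f n))‖ ≤
        24 * (l * A) * (H ^ 2 * H) + 24 / A * (2 * H) := by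
      refine hsum.trans (add_le_add ?_ ?_)
      · exact mul_le_mul_of_nonneg_left s1 (by positivity)
      · exact mul_le_mul_of_nonneg_left s2 (by positivity)
    calc _ ≤ 2 * l / ((H ^ 2 : ℕ) : ℝ) * (l + 2 * (24 * (l * A) * (H ^ 2 * H) + 24 / A * (2 * H))) := by
          apply mul_le_mul_of_nonneg_left _ (by positivity)
          linarith
      _ = _ := by
          have : 192 * l / (H * √lam) * (1 / √((j : ℝ) + 1)) = 192 * l / (H * A) := by
            rw [hA]; field_simp
          rw [this]
          push_cast
          field_simp
          ring
  have w := weyl_e f L H l hH le_rfl hHL'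
  set T := ∑ j ∈ Finset.range H, ‖∑ n ∈ Finset.range (L - (j + 1)), e (f (n + (j + 1)) - f n)‖ with hT
  have hT0 : 0 ≤ T := Finset.sum_nonneg fun _ _ => norm_nonneg _
  have hT2 : T ^ 2 ≤ H * (H * (2 * l ^ 2 / H ^ 2) + 96 * l ^ 2 * H * √lam * (H * √(H : ℝ)) +
        192 * l / (H * √lam) * (2 * √(H : ℝ))) := by
    have := sq_sum_le_card_mul_sum_sq (s := Finset.range H)
      (f := fun j => ‖∑ n ∈ Finset.range (L - (j + 1)), e (f (n + (j + 1)) - f n)‖)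
    rw [Finset.card_range] at this
    refine this.trans (mul_le_mul_of_nonneg_left ?_ (by positivity))
    refine (Finset.sum_le_sum fun j _ => hS1 j).trans ?_
    rw [Finset.sum_add_distrib, Finset.sum_add_distrib, ← Finset.mul_sum, ← Finset.mul_sum,
      ← Finset.mul_sum, Finset.sum_const, Finset.card_range, nsmul_eq_mul]
    have a1 := mul_le_mul_of_nonneg_left (sum_sqrt H) (by positivity : 0 ≤ 96 * l ^ 2 * H * √lam)
    have a2 := mul_le_mul_of_nonneg_left (sum_inv_sqrt H) (by positivity : 0 ≤ 192 * l / (H * √lam))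
    rw [← mul_assoc (96 * l ^ 2 * (H : ℝ)) (√lam)]
    linarith
  have hq : √(lam * H ^ 3) = √lam * (H * √(H : ℝ)) := by
    rw [Real.sqrt_mul hl.le, show (H : ℝ) ^ 3 = H ^ 2 * H by ring, Real.sqrt_mul (by positivity),
      Real.sqrt_sq (by positivity)]
  rw [hq]
  set r := √(H : ℝ) with hr
  have hr0 : 0 < r := Real.sqrt_pos.2 (by linarith)
  have hrr : r ^ 2 = H := Real.sq_sqrt (by linarith)
  set s := √lam with hs
  have hs0 : 0 < s := Real.sqrt_pos.2 hl
  rw [← hrr] at hT2 w ⊢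
  calc ‖∑ n ∈ Finset.range L, e (f n)‖ ^ 4 = (‖∑ n ∈ Finset.range L, e (f n)‖ ^ 2) ^ 2 := by ring
    _ ≤ (2 * l / r ^ 2 * (l + 2 * T)) ^ 2 := pow_le_pow_left₀ (by positivity) w 2
    _ = (2 * l / r ^ 2) ^ 2 * (l + 2 * T) ^ 2 := by ring
    _ ≤ (2 * l / r ^ 2) ^ 2 * (2 * l ^ 2 + 8 * T ^ 2) := by
        apply mul_le_mul_of_nonneg_left _ (by positivity)
        nlinarith [sq_nonneg (l - 2 * T)]
    _ ≤ (2 * l / r ^ 2) ^ 2 * (2 * l ^ 2 + 8 * (r ^ 2 * (r ^ 2 * (2 * l ^ 2 / (r ^ 2) ^ 2) +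
          96 * l ^ 2 * r ^ 2 * s * (r ^ 2 * r) + 192 * l / (r ^ 2 * s) * (2 * r)))) := by
        apply mul_le_mul_of_nonneg_left _ (by positivity)
        linarith
    _ = 72 * (l ^ 4 / (r ^ 2) ^ 2) + 3072 * (l ^ 4 * (s * (r ^ 2 * r))) +
          12288 * (l ^ 3 * (1 / (s * (r ^ 2 * r)))) := by
        field_simp
        ring
    _ ≤ _ := by
        have p1 : 0 ≤ l ^ 4 / (r ^ 2) ^ 2 := by positivity
        have p2 : 0 ≤ l ^ 4 * (s * (r ^ 2 * r)) := by positivity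
        have p3 : 0 ≤ l ^ 3 * (1 / (s * (r ^ 2 * r))) := by positivity
        linarith

lemma stepd (φ φ' : ℝ → ℝ) (p q h lo hi : ℝ) (hh : 0 ≤ h)
    (hd : ∀ u, p ≤ u → u ≤ q → HasDerivAt φ (φ' u) u)
    (hb : ∀ u, p ≤ u → u ≤ q → lo ≤ φ' u ∧ φ' u ≤ hi) :
    ∀ u, p ≤ u → u ≤ q - h → lo * h ≤ φ (u + h) - φ u ∧ φ (u + h) - φ u ≤ hi * h := by
  intro u hu1 hu2
  rcases hh.eq_or_lt with rfl | hh
  · simp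
  · obtain ⟨v, hv, hv2⟩ := exists_hasDerivAt_eq_slope φ φ' (by linarith : u < u + h)
      (fun v hv => (hd v (by linarith [hv.1]) (by linarith [hv.2])).continuousAt.continuousWithinAt)
      (fun v hv => hd v (by linarith [hv.1]) (by linarith [hv.2]))
    have hb' := hb v (by linarith [hv.1]) (by linarith [hv.2])
    rw [hv2, add_sub_cancel_left, le_div_iff₀ hh, div_le_iff₀ hh] at hb'
    exact hb'

lemma shiftd (φ φ' : ℝ → ℝ) (p q h : ℝ) (hh : 0 ≤ h)
    (hd : ∀ u, p ≤ u → u ≤ q → HasDerivAt φ (φ' u) u) :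
    ∀ u, p ≤ u → u ≤ q - h →
      HasDerivAt (fun v => φ (v + h) - φ v) (φ' (u + h) - φ' u) u := by
  intro u h1 h2
  exact ((hd (u + h) (by linarith) (by linarith)).comp_add_const u h).sub
    (hd u h1 (by linarith))

lemma four_diff (F F1 F2 F3 F4 : ℝ → ℝ) (p q lam : ℝ)
    (d0 : ∀ u, p ≤ u → u ≤ q → HasDerivAt F (F1 u) u)
    (d1 : ∀ u, p ≤ u → u ≤ q → HasDerivAt F1 (F2 u) u)
    (d2 : ∀ u, p ≤ u → u ≤ q → HasDerivAt F2 (F3 u) u)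
    (d3 : ∀ u, p ≤ u → u ≤ q → HasDerivAt F3 (F4 u) u)
    (hb : ∀ u, p ≤ u → u ≤ q → lam ≤ F4 u ∧ F4 u ≤ 4 * lam)
    (h1 h2 : ℝ) (hh1 : 0 ≤ h1) (hh2 : 0 ≤ h2) (d : ℝ → ℝ)
    (hd : d = fun u => F (u + h2 + h1) - F (u + h2) - (F (u + h1) - F u))
    (u : ℝ) (hu : p ≤ u) (hu2 : u + 2 + h2 + h1 ≤ q) :
    lam * h1 * h2 ≤ d (u + 1 + 1) - d (u + 1) - (d (u + 1) - d u) ∧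
      d (u + 1 + 1) - d (u + 1) - (d (u + 1) - d u) ≤ 4 * (lam * h1 * h2) := by
  have a1 := stepd F3 F4 p q h1 _ _ hh1 d3 hb
  have c2 := shiftd F2 F3 p q h1 hh1 d2
  have a2 := stepd _ _ p (q - h1) h2 _ _ hh2 c2 a1
  have c1 := shiftd _ _ p (q - h1) h2 hh2 (shiftd F1 F2 p q h1 hh1 d1)
  have a3 := stepd _ _ p (q - h1 - h2) 1 _ _ zero_le_one c1 a2
  have c0 := shiftd _ _ p (q - h1 - h2) 1 zero_le_one
    (shiftd _ _ p (q - h1) h2 hh2 (shiftd F F1 p q h1 hh1 d0))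
  have a4 := stepd _ _ p (q - h1 - h2 - 1) 1 _ _ zero_le_one c0 a3 u hu (by linarith)
  subst hd
  simp only [mul_one] at a4
  refine ⟨a4.1, a4.2.trans (le_of_eq (by ring))⟩

lemma phase (c B M : ℝ) (hc1 : 2 < c) (hc2 : c < 3) (hB : 0 < B) (hM : 0 < M) (lam : ℝ)
    (hlam : lam = B * (c * (c - 1) * (c - 2) * (3 - c)) * (2 * M) ^ (c - 4))
    (h1 h2 : ℝ) (hh1 : 0 ≤ h1) (hh2 : 0 ≤ h2) (d : ℝ → ℝ) (F : ℝ → ℝ)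
    (hF : F = fun u => -(B * u ^ c))
    (hd : d = fun u => F (u + h2 + h1) - F (u + h2) - (F (u + h1) - F u))
    (u : ℝ) (hu : M ≤ u) (hu2 : u + 2 + h2 + h1 ≤ 2 * M) :
    lam * h1 * h2 ≤ d (u + 1 + 1) - d (u + 1) - (d (u + 1) - d u) ∧
      d (u + 1 + 1) - d (u + 1) - (d (u + 1) - d u) ≤ 4 * (lam * h1 * h2) := by
  have hk : 0 < B * (c * (c - 1) * (c - 2) * (3 - c)) := by
    have : 0 < c - 1 := by linarith
    have : 0 < c - 2 := by linarith
    have : 0 < 3 - c := by linarith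
    positivity
  have gen : ∀ (k a : ℝ) (u : ℝ), M ≤ u → HasDerivAt (fun u => k * u ^ a) (k * a * u ^ (a - 1)) u := by
    intro k a u hu
    have := (Real.hasDerivAt_rpow_const (x := u) (p := a) (Or.inl (by linarith))).const_mul k
    rwa [← mul_assoc] at this
  refine four_diff F (fun u => (-B * c) * u ^ (c - 1)) (fun u => (-B * c * (c - 1)) * u ^ (c - 1 - 1))
    (fun u => (-B * c * (c - 1) * (c - 1 - 1)) * u ^ (c - 1 - 1 - 1))
    (fun u => (-B * c * (c - 1) * (c - 1 - 1) * (c - 1 - 1 - 1)) * u ^ (c - 1 - 1 - 1 - 1))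
    M (2 * M) lam ?_ ?_ ?_ ?_ ?_ h1 h2 hh1 hh2 d hd u hu hu2
  · intro u hu _
    have := gen (-B) c u hu
    rw [hF]
    simpa only [neg_mul] using this
  · intro u hu _; exact gen _ _ u hu
  · intro u hu _; exact gen _ _ u hu
  · intro u hu _; exact gen _ _ u hu
  · intro u hu1 hu2
    have hu0 : 0 < u := by linarith
    rw [show -B * c * (c - 1) * (c - 1 - 1) * (c - 1 - 1 - 1) =
      B * (c * (c - 1) * (c - 2) * (3 - c)) by ring, show c - 1 - 1 - 1 - 1 = c - 4 by ring, hlam]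
    constructor
    · apply mul_le_mul_of_nonneg_left _ hk.le
      exact Real.rpow_le_rpow_of_nonpos hu0 hu2 (by linarith)
    · rw [show 4 * (B * (c * (c - 1) * (c - 2) * (3 - c)) * (2 * M) ^ (c - 4)) =
        B * (c * (c - 1) * (c - 2) * (3 - c)) * (4 * (2 * M) ^ (c - 4)) by ring]
      apply mul_le_mul_of_nonneg_left _ hk.le
      calc u ^ (c - 4) ≤ M ^ (c - 4) := Real.rpow_le_rpow_of_nonpos hM hu1 (by linarith)
        _ ≤ 4 * (2 * M) ^ (c - 4) := by
          rw [Real.mul_rpow (by norm_num) hM.le, ← mul_assoc]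
          have : (1 : ℝ) ≤ 4 * 2 ^ (c - 4) := by
            have e4 : (4 : ℝ) = 2 ^ (2 : ℝ) := by norm_num
            rw [e4, ← Real.rpow_add (by norm_num)]
            rw [← e4]
            exact Real.one_le_rpow (by norm_num) (by linarith)
          nlinarith [Real.rpow_pos_of_pos hM (c - 4)]
lemma inner_bound (c B M X lam : ℝ) (hc1 : 2 < c) (hc2 : c < 3) (hB : 0 < B) (hX : 1 < X)
    (hX2 : 2 ≤ X ^ (0.036 : ℝ))
    (hlam : lam = B * (c * (c - 1) * (c - 2) * (3 - c)) * (2 * M) ^ (c - 4))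
    (hM1 : X ^ (0.71 : ℝ) ≤ M) (hM2 : M ≤ X ^ (1.001 : ℝ))
    (hT1 : X ^ (0.99 : ℝ) ≤ lam * M ^ 4) (hT2 : lam * M ^ 4 ≤ X ^ (2.06 : ℝ)) :
    ‖∑ m ∈ Finset.Ioc ⌊M⌋₊ ⌊2 * M⌋₊, e (-(B * (m : ℝ) ^ c))‖ ≤ 40 * (M * X ^ (-(1 / 36) : ℝ)) := by
  have hX0 : 0 < X := by linarith
  have hmono : ∀ {a b : ℝ}, a ≤ b → X ^ a ≤ X ^ b := fun h =>
    Real.rpow_le_rpow_of_exponent_le hX.le h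
  have hM0 : 0 < M := lt_of_lt_of_le (Real.rpow_pos_of_pos hX0 _) hM1
  have hM2' : 2 ≤ M := hX2.trans ((hmono (by norm_num)).trans hM1)
  have hT0 : 0 < lam * M ^ 4 := lt_of_lt_of_le (Real.rpow_pos_of_pos hX0 _) hT1
  have hl0 : 0 < lam := pos_of_mul_pos_left hT0 (by positivity)
  obtain ⟨μ, hμ⟩ : ∃ μ : ℝ, M = X ^ μ := ⟨Real.logb X M, (Real.rpow_logb hX0 hX.ne' hM0).symm⟩
  obtain ⟨t, ht⟩ : ∃ t : ℝ, lam * M ^ 4 = X ^ t :=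
    ⟨Real.logb X _, (Real.rpow_logb hX0 hX.ne' hT0).symm⟩
  have m1 : 0.71 ≤ μ := by rw [hμ] at hM1; exact (Real.rpow_le_rpow_left_iff hX).1 hM1
  have m2 : μ ≤ 1.001 := by rw [hμ] at hM2; exact (Real.rpow_le_rpow_left_iff hX).1 hM2
  have t1 : 0.99 ≤ t := by rw [ht] at hT1; exact (Real.rpow_le_rpow_left_iff hX).1 hT1
  have t2 : t ≤ 2.06 := by rw [ht] at hT2; exact (Real.rpow_le_rpow_left_iff hX).1 hT2
  have hlamX : lam = X ^ (t - 4 * μ) := by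
    rw [Real.rpow_sub hX0, ← ht, mul_comm 4 μ, Real.rpow_mul hX0.le, ← hμ]
    rw [show (4 : ℝ) = ((4 : ℕ) : ℝ) by norm_num, Real.rpow_natCast]
    field_simp
  set η : ℝ := μ / 2 - t / 5 + 0.18 with hη
  set H := ⌊X ^ η⌋₊ with hH
  have hXη : 2 ≤ X ^ η := hX2.trans (hmono (by rw [hη]; linarith))
  have hHle : (H : ℝ) ≤ X ^ η := Nat.floor_le (by positivity)
  have hHge : X ^ η / 2 ≤ H := by
    have := Nat.lt_floor_add_one (X ^ η)
    linarith
  have hHpos : (0 : ℝ) < H := by linarith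
  set a := ⌊M⌋₊ with ha
  set b := ⌊2 * M⌋₊ with hb
  have a1 : (a : ℝ) ≤ M := Nat.floor_le hM0.le
  have a2 : M < a + 1 := Nat.lt_floor_add_one M
  have b1 : (b : ℝ) ≤ 2 * M := Nat.floor_le (by positivity)
  have b2 : 2 * M < b + 1 := Nat.lt_floor_add_one (2 * M)
  have hab : a ≤ b := Nat.floor_mono (by linarith)
  set L := b - a with hL
  have hLr : (L : ℝ) = b - a := by rw [hL, Nat.cast_sub hab]
  have L1 : M / 2 ≤ L := by rw [hLr]; linarith
  have L2 : (L : ℝ) ≤ 2 * M := by rw [hLr]; linarith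
  have hH2 : H ^ 2 ≤ L := by
    have : (H : ℝ) ^ 2 ≤ L := by
      calc (H : ℝ) ^ 2 ≤ (X ^ η) ^ 2 := pow_le_pow_left₀ hHpos.le hHle 2
        _ = X ^ (2 * η) := by
          rw [mul_comm, Real.rpow_mul hX0.le]; norm_num
        _ ≤ X ^ (μ - 0.036) := hmono (by rw [hη]; linarith)
        _ = M / X ^ (0.036 : ℝ) := by rw [Real.rpow_sub hX0, ← hμ]
        _ ≤ M / 2 := div_le_div_of_nonneg_left hM0.le (by norm_num) hX2
        _ ≤ L := L1
    exact_mod_cast this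
  have hsum : ∑ m ∈ Finset.Ioc a b, e (-(B * (m : ℝ) ^ c)) =
      ∑ n ∈ Finset.range L, e (-(B * ((a : ℝ) + 1 + n) ^ c)) := by
    have : Finset.Ioc a b = Finset.Ico (a + 1) (b + 1) := by
      ext n; simp only [Finset.mem_Ioc, Finset.mem_Ico]; omega
    rw [this, Finset.sum_Ico_eq_sum_range, show b + 1 - (a + 1) = L by omega]
    push_cast; rfl
  rw [hsum]
  have h4 := fourth (fun n => -(B * ((a : ℝ) + 1 + n) ^ c)) L H lam hl0
    (by exact_mod_cast hHpos) hH2 (by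
      intro h1 h2 n hh1 hh2 hn d hd
      have hbn : ((a : ℝ) + 1 + n) + 2 + h2 + h1 ≤ 2 * M := by
        have : a + 1 + n + 2 + h2 + h1 ≤ b := by omega
        have : ((a + 1 + n + 2 + h2 + h1 : ℕ) : ℝ) ≤ b := by exact_mod_cast this
        push_cast at this
        linarith
      have := phase c B M hc1 hc2 hB hM0 lam hlam h1 h2 (by positivity) (by positivity) _ _ rfl rfl
        ((a : ℝ) + 1 + n) (by linarith [(Nat.cast_nonneg n : (0:ℝ) ≤ n)]) hbn
      subst hd
      have key : ∀ x y : ℝ, lam * h1 * h2 ≤ x ∧ x ≤ 4 * (lam * h1 * h2) → x = y →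
        lam * h1 * h2 ≤ y ∧ y ≤ 4 * (lam * h1 * h2) := by rintro x y h rfl; exact h
      refine key _ _ this ?_
      push_cast
      ring_nf)
  set S := ‖∑ n ∈ Finset.range L, e (-(B * ((a : ℝ) + 1 + n) ^ c))‖ with hS
  have hq1 : X ^ (t - 4 * μ + 3 * η) / 8 ≤ lam * H ^ 3 := by
    calc X ^ (t - 4 * μ + 3 * η) / 8 = lam * (X ^ η / 2) ^ 3 := by
          rw [Real.rpow_add hX0, ← hlamX, mul_comm 3 η, Real.rpow_mul hX0.le]
          rw [show (3 : ℝ) = ((3 : ℕ) : ℝ) by norm_num, Real.rpow_natCast]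
          ring
      _ ≤ _ := mul_le_mul_of_nonneg_left (pow_le_pow_left₀ (by positivity) hHge 3) hl0.le
  have hq2 : lam * H ^ 3 ≤ X ^ (t - 4 * μ + 3 * η) := by
    calc _ ≤ lam * (X ^ η) ^ 3 :=
          mul_le_mul_of_nonneg_left (pow_le_pow_left₀ hHpos.le hHle 3) hl0.le
      _ = _ := by
          rw [Real.rpow_add hX0 (t - 4 * μ) (3 * η), ← hlamX, mul_comm 3 η, Real.rpow_mul hX0.le]
          rw [show (3 : ℝ) = ((3 : ℕ) : ℝ) by norm_num, Real.rpow_natCast]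
  set σ := t - 4 * μ + 3 * η with hσ
  have hsq : √(X ^ σ) = X ^ (σ / 2) := by
    rw [Real.sqrt_eq_rpow, ← Real.rpow_mul hX0.le]; congr 1; ring
  have r2 : √(lam * H ^ 3) ≤ X ^ (σ / 2) := hsq ▸ Real.sqrt_le_sqrt hq2
  have r1 : X ^ (σ / 2) / 3 ≤ √(lam * H ^ 3) := by
    apply Real.le_sqrt_of_sq_le
    have e1 : (X ^ (σ / 2)) ^ 2 = X ^ σ := by rw [← hsq]; exact Real.sq_sqrt (by positivity)
    rw [div_pow, e1]
    have : 0 < X ^ σ := by positivity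
    linarith
  have r1' : 1 / √(lam * H ^ 3) ≤ 3 * X ^ (-(σ / 2)) := by
    rw [Real.rpow_neg hX0.le]
    calc _ ≤ 1 / (X ^ (σ / 2) / 3) := one_div_le_one_div_of_le (by positivity) r1
      _ = _ := by field_simp
  have hM4 : M ^ 4 = X ^ (4 * μ) := by
    rw [mul_comm, Real.rpow_mul hX0.le, ← hμ]
    rw [show (4 : ℝ) = ((4 : ℕ) : ℝ) by norm_num, Real.rpow_natCast]
  have hM3 : M ^ 3 = X ^ (3 * μ) := by
    rw [mul_comm, Real.rpow_mul hX0.le, ← hμ]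
    rw [show (3 : ℝ) = ((3 : ℕ) : ℝ) by norm_num, Real.rpow_natCast]
  have hL4 : (L : ℝ) ^ 4 ≤ 16 * X ^ (4 * μ) := by
    calc (L : ℝ) ^ 4 ≤ (2 * M) ^ 4 := pow_le_pow_left₀ (by positivity) L2 4
      _ = _ := by rw [← hM4]; ring
  have hL3 : (L : ℝ) ^ 3 ≤ 8 * X ^ (3 * μ) := by
    calc (L : ℝ) ^ 3 ≤ (2 * M) ^ 3 := pow_le_pow_left₀ (by positivity) L2 3
      _ = _ := by rw [← hM3]; ring
  have T1 : (L : ℝ) ^ 4 / H ^ 2 ≤ 64 * X ^ (4 * μ - 1 / 9) := by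
    calc (L : ℝ) ^ 4 / H ^ 2 ≤ (16 * X ^ (4 * μ)) / (X ^ η / 2) ^ 2 :=
          div_le_div₀ (by positivity) hL4 (by positivity) (pow_le_pow_left₀ (by positivity) hHge 2)
      _ = 64 * X ^ (4 * μ - 2 * η) := by
          rw [Real.rpow_sub hX0, mul_comm 2 η, Real.rpow_mul hX0.le η 2]
          rw [show (X ^ η) ^ (2 : ℝ) = (X ^ η) ^ 2 by norm_num]
          field_simp; norm_num
      _ ≤ _ := mul_le_mul_of_nonneg_left (hmono (by rw [hη]; linarith)) (by norm_num)
  have T2 : (L : ℝ) ^ 4 * √(lam * H ^ 3) ≤ 16 * X ^ (4 * μ - 1 / 9) := by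
    calc _ ≤ (16 * X ^ (4 * μ)) * X ^ (σ / 2) :=
          mul_le_mul hL4 r2 (by positivity) (by positivity)
      _ = 16 * X ^ (4 * μ + σ / 2) := by rw [Real.rpow_add hX0]; ring
      _ ≤ _ := mul_le_mul_of_nonneg_left (hmono (by rw [hσ, hη]; linarith)) (by norm_num)
  have T3 : (L : ℝ) ^ 3 * (1 / √(lam * H ^ 3)) ≤ 24 * X ^ (4 * μ - 1 / 9) := by
    calc _ ≤ (8 * X ^ (3 * μ)) * (3 * X ^ (-(σ / 2))) :=
          mul_le_mul hL3 r1' (by positivity) (by positivity)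
      _ = 24 * X ^ (3 * μ + -(σ / 2)) := by rw [Real.rpow_add hX0]; ring
      _ ≤ _ := mul_le_mul_of_nonneg_left (hmono (by rw [hσ, hη]; linarith)) (by norm_num)
  have hfin : S ^ 4 ≤ (40 * (M * X ^ (-(1 / 36) : ℝ))) ^ 4 := by
    have e1 : (40 * (M * X ^ (-(1 / 36) : ℝ))) ^ 4 = 2560000 * X ^ (4 * μ - 1 / 9) := by
      rw [mul_pow, mul_pow, hM4, ← Real.rpow_natCast (X ^ (-(1 / 36) : ℝ)) 4, ← Real.rpow_mul hX0.le,
        ← Real.rpow_add hX0]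
      norm_num
      congr 1
    rw [e1]
    have : 0 < X ^ (4 * μ - 1 / 9) := by positivity
    linarith
  exact le_of_pow_le_pow_left₀ (by norm_num) (by positivity) hfin

lemma ev_pow (k a : ℝ) (ha : 0 < a) : ∀ᶠ X : ℝ in Filter.atTop, k ≤ X ^ a :=
  (tendsto_rpow_atTop ha).eventually_ge_atTop k

lemma ev_log (a : ℝ) (ha : 0 < a) : ∀ᶠ X : ℝ in Filter.atTop, (Real.log X) ^ 5 ≤ X ^ a := by
  have h := (isLittleO_log_rpow_atTop (r := a / 5) (by positivity)).bound one_pos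
  filter_upwards [h, Filter.eventually_ge_atTop 1] with X hX h1
  have hl := Real.log_nonneg h1
  rw [one_mul, Real.norm_of_nonneg hl, Real.norm_of_nonneg (by positivity)] at hX
  calc (Real.log X) ^ 5 ≤ (X ^ (a / 5)) ^ 5 := pow_le_pow_left₀ hl hX 5
    _ = X ^ a := by
      rw [← Real.rpow_natCast, ← Real.rpow_mul (by linarith)]; congr 1; push_cast; ring

/-- Lemma 2.14, Type I estimate: for `2 < c < 37/18`, sufficiently small
`η > 0`, `δ = c/2 − 1 + η`, `τ ≤ |x| ≤ K` (where `τ = X^{1−c−η}`, `K = (log X)⁵`),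
`MN ≍ X`, `M ≫ X^{1−72δ/7}` and bounded coefficients `b_n`, one has
`Σ_{m∼M} Σ_{n∼N} b_n e(x m^c n^c) ≪_{c,η} X^{1−δ}`. -/
theorem stmt16 (c : ℝ) (hc1 : 2 < c) (hc2 : c < 37 / 18) :
    ∃ η₀ > 0, ∀ η : ℝ, 0 < η → η < η₀ → ∀ δ : ℝ, δ = c / 2 - 1 + η →
    ∀ D₁ D₂ D₃ D₄ : ℝ, 0 < D₁ → 0 < D₂ → 0 < D₃ → 0 < D₄ →
    ∃ C > 0, ∃ X₀ : ℝ, ∀ X ≥ X₀, ∀ τ K : ℝ,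
      τ = X ^ (1 - c - η) → K = (Real.log X) ^ 5 →
    ∀ x : ℝ, τ ≤ |x| → |x| ≤ K →
    ∀ M N : ℝ, 1 ≤ M → 1 ≤ N → D₁ * X ≤ M * N → M * N ≤ D₂ * X →
      D₃ * X ^ (1 - 72 * δ / 7) ≤ M →
    ∀ b : ℕ → ℂ, (∀ n, ‖b n‖ ≤ D₄) →
      ‖∑ m ∈ Finset.Ioc ⌊M⌋₊ ⌊2 * M⌋₊, ∑ n ∈ Finset.Ioc ⌊N⌋₊ ⌊2 * N⌋₊,
          b n * e (x * (m : ℝ) ^ c * (n : ℝ) ^ c)‖ ≤ C * X ^ (1 - δ) := by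
  refine ⟨min 0.001 (37 / 36 - c / 2), lt_min (by norm_num) (by linarith), ?_⟩
  intro η hη0 hη1 δ hδ D₁ D₂ D₃ D₄ hD1 hD2 hD3 hD4
  have hη2 : η < 0.001 := lt_of_lt_of_le hη1 (min_le_left _ _)
  have hη3 : η < 37 / 36 - c / 2 := lt_of_lt_of_le hη1 (min_le_right _ _)
  have hδ1 : δ < 1 / 36 := by linarith
  set κ : ℝ := c * (c - 1) * (c - 2) * (3 - c) * 2 ^ (c - 4) with hκ
  have hκ0 : 0 < κ := by
    have : 0 < c - 1 := by linarith
    have : 0 < c - 2 := by linarith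
    have : 0 < 3 - c := by linarith
    positivity
  have hev : ∀ᶠ X : ℝ in Filter.atTop, 1 < X ∧ 2 ≤ X ^ (0.036 : ℝ) ∧
      (Real.log X) ^ 5 ≤ X ^ (0.001 : ℝ) ∧ 1 / D₃ ≤ X ^ (0.004 : ℝ) ∧ D₂ ≤ X ^ (0.001 : ℝ) ∧
      1 / (κ * D₁ ^ c) ≤ X ^ (0.009 : ℝ) ∧ κ * (2 * D₂) ^ c ≤ X ^ (0.001 : ℝ) := by
    filter_upwards [Filter.eventually_gt_atTop 1, ev_pow 2 0.036 (by norm_num),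
      ev_log 0.001 (by norm_num), ev_pow (1 / D₃) 0.004 (by norm_num), ev_pow D₂ 0.001 (by norm_num),
      ev_pow (1 / (κ * D₁ ^ c)) 0.009 (by norm_num), ev_pow (κ * (2 * D₂) ^ c) 0.001 (by norm_num)]
      with X a1 a2 a3 a4 a5 a6 a7
    exact ⟨a1, a2, a3, a4, a5, a6, a7⟩
  obtain ⟨X₀, hX₀⟩ := Filter.eventually_atTop.1 hev
  refine ⟨80 * D₄ * D₂, by positivity, X₀, ?_⟩
  intro X hXX τ K hτ hK x hx1 hx2 M N hM hN hMN1 hMN2 hM3 b hb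
  obtain ⟨hX1, hX2, hlog, hXD3, hXD2, hXlo, hXhi⟩ := hX₀ X hXX
  have hX0 : 0 < X := by linarith
  have hM0 : 0 < M := by linarith
  have hN0 : 0 < N := by linarith
  have hmono : ∀ {a b : ℝ}, a ≤ b → X ^ a ≤ X ^ b := fun h =>
    Real.rpow_le_rpow_of_exponent_le hX1.le h
  have hxpos : 0 < |x| := lt_of_lt_of_le (by rw [hτ]; positivity) hx1
  have hMlo : X ^ (0.71 : ℝ) ≤ M := by
    refine le_trans ?_ hM3
    calc X ^ (0.71 : ℝ) = 1 * X ^ (0.71 : ℝ) := (one_mul _).symm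
      _ ≤ (D₃ * X ^ (0.004 : ℝ)) * X ^ (0.71 : ℝ) := by
        apply mul_le_mul_of_nonneg_right _ (by positivity)
        rw [div_le_iff₀ hD3] at hXD3; linarith
      _ = D₃ * X ^ (0.714 : ℝ) := by
        rw [mul_assoc, ← Real.rpow_add hX0]; norm_num
      _ ≤ _ := mul_le_mul_of_nonneg_left (hmono (by linarith)) hD3.le
  have hMhi : M ≤ X ^ (1.001 : ℝ) := by
    calc M ≤ M * N := by nlinarith
      _ ≤ D₂ * X := hMN2
      _ ≤ X ^ (0.001 : ℝ) * X := mul_le_mul_of_nonneg_right hXD2 hX0.le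
      _ = X ^ (1.001 : ℝ) := by
        nth_rewrite 2 [← Real.rpow_one X]
        rw [← Real.rpow_add hX0]; norm_num
  have hinner : ∀ n ∈ Finset.Ioc ⌊N⌋₊ ⌊2 * N⌋₊,
      ‖∑ m ∈ Finset.Ioc ⌊M⌋₊ ⌊2 * M⌋₊, e (x * (m : ℝ) ^ c * (n : ℝ) ^ c)‖ ≤
        40 * (M * X ^ (-(1 / 36) : ℝ)) := by
    intro n hn
    rw [Finset.mem_Ioc] at hn
    have n1 : N < n := (Nat.floor_lt hN0.le).1 hn.1
    have n2 : (n : ℝ) ≤ 2 * N := (Nat.le_floor_iff (by positivity)).1 hn.2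
    have hn0 : (0 : ℝ) < n := by linarith
    set B := |x| * (n : ℝ) ^ c with hB
    have hB0 : 0 < B := by positivity
    have hT : B * (c * (c - 1) * (c - 2) * (3 - c)) * (2 * M) ^ (c - 4) * M ^ 4 =
        κ * |x| * ((M * n) ^ c) := by
      rw [Real.mul_rpow (by norm_num) hM0.le, Real.mul_rpow hM0.le hn0.le, hB, hκ]
      have : M ^ c = M ^ (c - 4) * M ^ 4 := by
        rw [← Real.rpow_natCast M 4, ← Real.rpow_add hM0]; congr 1; push_cast; ring
      rw [this]; ring
    have q1 : D₁ * X ≤ M * n := hMN1.trans (mul_le_mul_of_nonneg_left n1.le hM0.le)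
    have q2 : M * n ≤ 2 * D₂ * X := by nlinarith
    have key := inner_bound c B M X _ hc1 (by linarith) hB0 hX1 hX2 rfl hMlo hMhi (by
      rw [hT]
      calc X ^ (0.99 : ℝ) = 1 * X ^ (0.99 : ℝ) := (one_mul _).symm
        _ ≤ (κ * D₁ ^ c * X ^ (0.009 : ℝ)) * X ^ (0.99 : ℝ) := by
          apply mul_le_mul_of_nonneg_right _ (by positivity)
          rw [div_le_iff₀ (by positivity)] at hXlo; linarith
        _ = κ * D₁ ^ c * X ^ (0.999 : ℝ) := by
          rw [mul_assoc, ← Real.rpow_add hX0]; norm_num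
        _ ≤ κ * D₁ ^ c * X ^ ((1 - c - η) + c) :=
          mul_le_mul_of_nonneg_left (hmono (by linarith)) (by positivity)
        _ = κ * X ^ (1 - c - η) * (D₁ * X) ^ c := by
          rw [Real.rpow_add hX0, Real.mul_rpow hD1.le hX0.le]; ring
        _ ≤ κ * |x| * ((M * n) ^ c) := by
          apply mul_le_mul
          · apply mul_le_mul_of_nonneg_left _ hκ0.le
            rw [← hτ]; exact hx1
          · exact Real.rpow_le_rpow (by positivity) q1 (by linarith)
          · positivity
          · positivity) (by
      rw [hT]
      calc κ * |x| * ((M * n) ^ c) ≤ κ * X ^ (0.001 : ℝ) * (2 * D₂ * X) ^ c := by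
            apply mul_le_mul
            · apply mul_le_mul_of_nonneg_left _ hκ0.le
              exact hx2.trans (hK ▸ hlog)
            · exact Real.rpow_le_rpow (by positivity) q2 (by linarith)
            · positivity
            · positivity
        _ = (κ * (2 * D₂) ^ c) * (X ^ (0.001 : ℝ) * X ^ c) := by
            rw [Real.mul_rpow (by positivity) hX0.le]; ring
        _ ≤ X ^ (0.001 : ℝ) * (X ^ (0.001 : ℝ) * X ^ c) :=
            mul_le_mul_of_nonneg_right hXhi (by positivity)
        _ = X ^ (0.001 + (0.001 + c)) := by rw [← Real.rpow_add hX0, ← Real.rpow_add hX0]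
        _ ≤ X ^ (2.06 : ℝ) := hmono (by linarith))
    rcases le_total 0 x with hx | hx
    · rw [← Complex.norm_conj, map_sum]
      have : ∀ m ∈ Finset.Ioc ⌊M⌋₊ ⌊2 * M⌋₊,
          (starRingEnd ℂ) (e (x * (m : ℝ) ^ c * (n : ℝ) ^ c)) = e (-(B * (m : ℝ) ^ c)) := by
        intro m _
        rw [e_conj, hB, abs_of_nonneg hx]; congr 1; ring
      rw [Finset.sum_congr rfl this]; exact key
    · have : ∀ m ∈ Finset.Ioc ⌊M⌋₊ ⌊2 * M⌋₊,
          e (x * (m : ℝ) ^ c * (n : ℝ) ^ c) = e (-(B * (m : ℝ) ^ c)) := by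
        intro m _
        rw [hB, abs_of_nonpos hx]; congr 1; ring
      rw [Finset.sum_congr rfl this]; exact key
  rw [Finset.sum_comm]
  have hcard : ((Finset.Ioc ⌊N⌋₊ ⌊2 * N⌋₊).card : ℝ) ≤ 2 * N := by
    rw [Nat.card_Ioc]
    have : ((⌊2 * N⌋₊ - ⌊N⌋₊ : ℕ) : ℝ) ≤ (⌊2 * N⌋₊ : ℝ) := by exact_mod_cast Nat.sub_le _ _
    exact this.trans (Nat.floor_le (by positivity))
  calc _ ≤ ∑ n ∈ Finset.Ioc ⌊N⌋₊ ⌊2 * N⌋₊, ‖∑ m ∈ Finset.Ioc ⌊M⌋₊ ⌊2 * M⌋₊,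
        b n * e (x * (m : ℝ) ^ c * (n : ℝ) ^ c)‖ := norm_sum_le _ _
    _ ≤ ∑ n ∈ Finset.Ioc ⌊N⌋₊ ⌊2 * N⌋₊, D₄ * (40 * (M * X ^ (-(1 / 36) : ℝ))) := by
        refine Finset.sum_le_sum fun n hn => ?_
        rw [← Finset.mul_sum, norm_mul]
        exact mul_le_mul (hb n) (hinner n hn) (norm_nonneg _) hD4.le
    _ = (Finset.Ioc ⌊N⌋₊ ⌊2 * N⌋₊).card * (D₄ * (40 * (M * X ^ (-(1 / 36) : ℝ)))) := by
        rw [Finset.sum_const, nsmul_eq_mul]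
    _ ≤ (2 * N) * (D₄ * (40 * (M * X ^ (-(1 / 36) : ℝ)))) :=
        mul_le_mul_of_nonneg_right hcard (by positivity)
    _ = 80 * D₄ * X ^ (-(1 / 36) : ℝ) * (M * N) := by ring
    _ ≤ 80 * D₄ * X ^ (-(1 / 36) : ℝ) * (D₂ * X) :=
        mul_le_mul_of_nonneg_left hMN2 (by positivity)
    _ = 80 * D₄ * D₂ * X ^ (-(1 / 36) + 1 : ℝ) := by
        rw [Real.rpow_add hX0, Real.rpow_one]; ring
    _ ≤ 80 * D₄ * D₂ * X ^ (1 - δ) :=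
        mul_le_mul_of_nonneg_left (hmono (by linarith)) (by positivity)
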